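/- arXiv:1004.0723 — 2 statements merged into one kernel-verified Lean document; each statement's English description precedes it below -/
import Mathlib

section
/- Let T₁ and T₂ be two commuting contractions on a complex Hilbert space H such that neither T₁ nor T₂ has 1 as an eigenvalue. Then there exist a complex Hilbert space G containing H (via an isometric embedding) and two commuting isometries U₁, U₂ on G such that T₁^m T₂^n = P_H U₁^m U₂^n|_H for all m,n ∈ ℕ, and neither U₁ nor U₂ has 1 as an eigenvalue. -/
open ContinuousLinearMap

/-!
Andô's theorem is proved in the strong form of a coextension: commuting isometries `V₁, V₂` on
`K ⊇ H` with `ι† Vᵢ = Tᵢ ι†`. For contractions with defect maps `J₁, J₂`, i.e.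
`‖Tᵢ h‖² + ‖Jᵢ h‖² = ‖h‖²`, the identity
`‖J₁ T₂ h‖² + ‖J₂ h‖² = ‖h‖² - ‖T₁ T₂ h‖² = ‖J₁ h‖² + ‖J₂ T₁ h‖²` yields a unitary carrying
`(J₁ T₂ h, J₂ h)` to `(J₁ h, J₂ T₁ h)`; twisting shifts by it makes the two Schäffer dilations
`(h, z) ↦ (Tᵢ h, Sᵢ (Jᵢ h, z))` commute.

Eigenvectors for the eigenvalue `1` are then removed by restriction. If `V₁ m = m`, then `ι† m` is
fixed by `T₁`, so `ι† m = 0`: the copy of `H` is orthogonal to the fixed vectors of `V₁` and of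
`V₂`. A vector fixed by a contraction is also fixed by its adjoint, so the common orthogonal
complement of these fixed vectors is invariant under both isometries, and it contains no fixed
vector other than `0`.
-/

theorem comp_pow_eq_pow_comp {R M N : Type*} [Semiring R] [TopologicalSpace M] [AddCommMonoid M]
    [Module R M] [TopologicalSpace N] [AddCommMonoid N] [Module R N] {A : M →L[R] N}
    {U : M →L[R] M} {T : N →L[R] N} (h : A ∘L U = T ∘L A) (n : ℕ) :
    A ∘L (U ^ n) = (T ^ n) ∘L A := by
  induction n with
  | zero => rfl
  | succ n ih => rw [pow_succ, pow_succ, mul_def, mul_def, ← comp_assoc, ih, comp_assoc, h]; rfl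

universe u

variable {𝕜 : Type*} [RCLike 𝕜]

section FixedVectors

variable {H K : Type*} [NormedAddCommGroup H] [InnerProductSpace 𝕜 H] [CompleteSpace H]
  [NormedAddCommGroup K] [InnerProductSpace 𝕜 K] [CompleteSpace K]

theorem adjoint_apply_eq_self_of_apply_eq_self {U : K →L[𝕜] K} (hU : ‖U‖ ≤ 1) {x : K}
    (hx : U x = x) : adjoint U x = x := by
  refine eq_of_norm_le_re_inner_eq_norm_sq (𝕜 := 𝕜) ?_ ?_
  · have hU' : ‖adjoint U‖ ≤ 1 := by rwa [LinearIsometryEquiv.norm_map]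
    simpa only [one_mul] using (adjoint U).le_of_opNorm_le hU' x
  · rw [adjoint_inner_left, hx, inner_self_eq_norm_sq]

theorem apply_mem_orthogonal_eqLocus_one {U W : K →L[𝕜] K} (hU : ‖U‖ ≤ 1)
    (hUW : U ∘L W = W ∘L U) {x : K} (hx : x ∈ (U.eqLocus (1 : K →L[𝕜] K))ᗮ) :
    W x ∈ (U.eqLocus (1 : K →L[𝕜] K))ᗮ := by
  intro m hm
  have hcomm : adjoint U (adjoint W m) = adjoint W (adjoint U m) := by
    rw [← comp_apply, ← comp_apply, ← adjoint_comp, ← adjoint_comp, hUW]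
  have hfixed : adjoint U (adjoint W m) = adjoint W m := by
    rw [hcomm, adjoint_apply_eq_self_of_apply_eq_self hU hm]
  have hmem : U (adjoint W m) = adjoint W m := by
    simpa only [adjoint_adjoint] using
      adjoint_apply_eq_self_of_apply_eq_self (by rwa [LinearIsometryEquiv.norm_map]) hfixed
  rw [← adjoint_inner_left]
  exact hx _ hmem

theorem apply_mem_orthogonal_eqLocus_one_of_coextension {T : H →L[𝕜] H} {U : K →L[𝕜] K}
    {ι : H →L[𝕜] K} (hTU : adjoint ι ∘L U = T ∘L adjoint ι) (hT : ∀ x, T x = x → x = 0) (h : H) :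
    ι h ∈ (U.eqLocus (1 : K →L[𝕜] K))ᗮ := by
  intro m hm
  have hfixed : T (adjoint ι m) = adjoint ι m := by
    rw [← comp_apply, ← hTU, comp_apply, show U m = m from hm]
  rw [← adjoint_inner_left, hT _ hfixed, inner_zero_left]

theorem adjoint_codRestrict (ι : H →L[𝕜] K) (N : Submodule 𝕜 K) [CompleteSpace N]
    (hι : ∀ h, ι h ∈ N) : adjoint (ι.codRestrict N hι) = adjoint ι ∘L N.subtypeL := by
  ext x
  refine ext_inner_left 𝕜 fun h => ?_
  rw [adjoint_inner_right, comp_apply, adjoint_inner_right]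
  rfl

theorem adjoint_codRestrict_comp_restrict {T : H →L[𝕜] H} {U : K →L[𝕜] K} {ι : H →L[𝕜] K}
    (hTU : adjoint ι ∘L U = T ∘L adjoint ι) {N : Submodule 𝕜 K} [CompleteSpace N]
    (hι : ∀ h, ι h ∈ N) (hU : ∀ x ∈ N, U x ∈ N) :
    adjoint (ι.codRestrict N hι) ∘L U.restrict hU = T ∘L adjoint (ι.codRestrict N hι) := by
  rw [adjoint_codRestrict, comp_assoc, subtypeL_comp_restrict, domRestrict, ← comp_assoc, hTU,
    comp_assoc]

theorem pow_mul_pow_eq_adjoint_comp {T₁ T₂ : H →L[𝕜] H} {U₁ U₂ : K →L[𝕜] K} {ι : H →L[𝕜] K}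
    (hι : ∀ h, ‖ι h‖ = ‖h‖) (h₁ : adjoint ι ∘L U₁ = T₁ ∘L adjoint ι)
    (h₂ : adjoint ι ∘L U₂ = T₂ ∘L adjoint ι) (m n : ℕ) :
    T₁ ^ m * T₂ ^ n = adjoint ι ∘L (U₁ ^ m * U₂ ^ n) ∘L ι :=
  calc
    T₁ ^ m * T₂ ^ n = (T₁ ^ m) ∘L (T₂ ^ n) ∘L adjoint ι ∘L ι := by
      rw [(norm_map_iff_adjoint_comp_self ι).1 hι]; rfl
    _ = (T₁ ^ m) ∘L (adjoint ι ∘L (U₂ ^ n)) ∘L ι := by rw [comp_pow_eq_pow_comp h₂, comp_assoc]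
    _ = (adjoint ι ∘L (U₁ ^ m)) ∘L (U₂ ^ n) ∘L ι := by rw [comp_pow_eq_pow_comp h₁]; rfl
    _ = adjoint ι ∘L (U₁ ^ m * U₂ ^ n) ∘L ι := rfl

end FixedVectors

section Defect

theorem exists_hilbert_of_core {V : Type u} [AddCommGroup V] [Module 𝕜 V]
    (c : PreInnerProductSpace.Core 𝕜 V) :
    ∃ (E : Type u) (_ : NormedAddCommGroup E) (_ : InnerProductSpace 𝕜 E) (_ : CompleteSpace E)
      (j : V →ₗ[𝕜] E), ∀ v, ‖j v‖ ^ 2 = RCLike.re (c.inner v v) := by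
  let _ : SeminormedAddCommGroup V := InnerProductSpace.Core.toSeminormedAddCommGroup (𝕜 := 𝕜)
  let _ : InnerProductSpace 𝕜 V := .ofCore c
  refine ⟨UniformSpace.Completion V, inferInstance, inferInstance, inferInstance,
    UniformSpace.Completion.toComplₗᵢ.toLinearMap, fun v => ?_⟩
  exact (congrArg (· ^ 2) (UniformSpace.Completion.norm_coe v)).trans (norm_sq_eq_re_inner v)

theorem exists_defect {H : Type u} {F : Type*} [NormedAddCommGroup H] [InnerProductSpace 𝕜 H]
    [NormedAddCommGroup F] [InnerProductSpace 𝕜 F] (T : H →ₗ[𝕜] F) (hT : ∀ h, ‖T h‖ ≤ ‖h‖) :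
    ∃ (E : Type u) (_ : NormedAddCommGroup E) (_ : InnerProductSpace 𝕜 E) (_ : CompleteSpace E)
      (D : H →ₗ[𝕜] E), ∀ h, ‖T h‖ ^ 2 + ‖D h‖ ^ 2 = ‖h‖ ^ 2 := by
  let c : PreInnerProductSpace.Core 𝕜 H :=
    { inner x y := inner 𝕜 x y - inner 𝕜 (T x) (T y)
      conj_inner_symm x y := by simp
      re_inner_nonneg x := by
        simpa [inner_self_eq_norm_sq] using pow_le_pow_left₀ (norm_nonneg _) (hT x) 2
      add_left x y z := by simp only [map_add, inner_add_left]; ring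
      smul_left x y r := by simp only [map_smul, inner_smul_left]; ring }
  obtain ⟨E, _, _, _, D, hD⟩ := exists_hilbert_of_core c
  refine ⟨E, inferInstance, inferInstance, inferInstance, D, fun h => ?_⟩
  have hre : RCLike.re (c.inner h h) = ‖h‖ ^ 2 - ‖T h‖ ^ 2 := by
    rw [← inner_self_eq_norm_sq (𝕜 := 𝕜) h, ← inner_self_eq_norm_sq (𝕜 := 𝕜) (T h), ← map_sub]
    rfl
  rw [hD, hre]
  ring

end Defect

section ExtensionToUnitary

variable {V E : Type*} [AddCommGroup V] [Module 𝕜 V] [NormedAddCommGroup E]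
  [InnerProductSpace 𝕜 E]

theorem inner_map_eq_of_norm_map_eq {α β : V →ₗ[𝕜] E} (h : ∀ v, ‖α v‖ = ‖β v‖) (v w : V) :
    inner 𝕜 (α v) (α w) = inner 𝕜 (β v) (β w) := by
  simp only [inner_eq_sum_norm_sq_div_four, ← map_add, ← map_sub, ← map_smul, h]

variable [CompleteSpace E]

-- The reflection in the closure of `{α v + β v}` works: `α v - β v` is orthogonal to it.
theorem exists_linearIsometryEquiv_of_orthogonal {α β : V →ₗ[𝕜] E}
    (hnorm : ∀ v, ‖α v‖ = ‖β v‖) (horth : ∀ v w, inner 𝕜 (α v) (β w) = 0) :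
    ∃ R : E ≃ₗᵢ[𝕜] E, ∀ v, R (α v) = β v := by
  let Z := (LinearMap.range (α + β)).topologicalClosure
  refine ⟨Z.reflection, fun v => ?_⟩
  have hadd : Z.reflection (α v + β v) = α v + β v :=
    Z.reflection_mem_subspace_eq_self (Submodule.le_topologicalClosure _ ⟨v, rfl⟩)
  have hsub : Z.reflection (α v - β v) = -(α v - β v) := by
    refine Z.reflection_mem_subspace_orthogonalComplement_eq_neg ?_
    rw [Submodule.orthogonal_closure]
    rintro _ ⟨w, rfl⟩
    rw [LinearMap.add_apply, inner_add_left, inner_sub_right, inner_sub_right, horth w v,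
      inner_eq_zero_symm.1 (horth v w), inner_map_eq_of_norm_map_eq hnorm]
    ring
  rw [map_add] at hadd
  rw [map_sub] at hsub
  linear_combination (norm := module) (1 / 2 : 𝕜) • hadd + (1 / 2 : 𝕜) • hsub

-- `(α₁ v, α₂ v)` is orthogonal to the swapped vectors `(β₂ w, β₁ w)`.
theorem exists_linearIsometryEquiv_prod {α₁ α₂ β₁ β₂ : V →ₗ[𝕜] E}
    (hnorm : ∀ v, ‖α₁ v‖ ^ 2 + ‖α₂ v‖ ^ 2 = ‖β₁ v‖ ^ 2 + ‖β₂ v‖ ^ 2)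
    (h₁₂ : ∀ v w, inner 𝕜 (α₁ v) (β₂ w) = 0) (h₂₁ : ∀ v w, inner 𝕜 (α₂ v) (β₁ w) = 0) :
    ∃ U : WithLp 2 (E × E) ≃ₗᵢ[𝕜] WithLp 2 (E × E),
      ∀ v, U (.toLp 2 (α₁ v, α₂ v)) = .toLp 2 (β₁ v, β₂ v) := by
  let e := (WithLp.linearEquiv 2 𝕜 (E × E)).symm.toLinearMap
  obtain ⟨R, hR⟩ := exists_linearIsometryEquiv_of_orthogonal
    (α := e ∘ₗ α₁.prod α₂) (β := e ∘ₗ β₂.prod β₁)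
    (fun v => by
      rw [← sq_eq_sq₀ (norm_nonneg _) (norm_nonneg _), WithLp.prod_norm_sq_eq_of_L2,
        WithLp.prod_norm_sq_eq_of_L2]
      exact (hnorm v).trans (add_comm _ _))
    (fun v w => by
      rw [WithLp.prod_inner_apply]
      exact (congrArg₂ (· + ·) (h₁₂ v w) (h₂₁ v w)).trans (add_zero 0))
  exact ⟨R.trans (.withLpProdComm 2 𝕜 E E), fun v =>
    congrArg (LinearIsometryEquiv.withLpProdComm 2 𝕜 E E) (hR v)⟩

end ExtensionToUnitary

section SquareSummable

open scoped lp

variable {ι E F : Type*} [NormedAddCommGroup E] [NormedAddCommGroup F]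

theorem summable_norm_sq (x : ℓ²(ι, E)) : Summable fun i => ‖x i‖ ^ 2 := by
  simpa using (lp.memℓp x).summable (by simp)

theorem norm_sq_eq_tsum_norm_sq (x : ℓ²(ι, E)) : ‖x‖ ^ 2 = ∑' i, ‖x i‖ ^ 2 := by
  simpa using lp.norm_rpow_eq_tsum (p := 2) (by simp) x

/-- The sequence `a, x 0, x 1, …`, so that `seqCons 0` is the unilateral shift. -/
def seqCons (a : E) (x : ℕ → E) : ℕ → E
  | 0 => a
  | n + 1 => x n

theorem summable_norm_sq_seqCons (a : E) (x : ℓ²(ℕ, E)) :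
    Summable fun n => ‖seqCons a x n‖ ^ 2 :=
  (summable_nat_add_iff 1).1 (summable_norm_sq x)

variable [NormedSpace 𝕜 E] [NormedSpace 𝕜 F]

variable (𝕜 E) in
/-- Prepending an entry to a square-summable sequence, as a linear map. -/
noncomputable def l2Cons : E × ℓ²(ℕ, E) →ₗ[𝕜] ℓ²(ℕ, E) where
  toFun z := ⟨seqCons z.1 z.2, memℓp_gen <| by simpa using summable_norm_sq_seqCons z.1 z.2⟩
  map_add' z w := by ext (_ | n) <;> rfl
  map_smul' r z := by ext (_ | n) <;> rfl

theorem norm_sq_l2Cons (z : E × ℓ²(ℕ, E)) : ‖l2Cons 𝕜 E z‖ ^ 2 = ‖z.1‖ ^ 2 + ‖z.2‖ ^ 2 := by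
  rw [norm_sq_eq_tsum_norm_sq, norm_sq_eq_tsum_norm_sq z.2]
  exact (summable_norm_sq_seqCons z.1 z.2).tsum_eq_zero_add

/-- A bounded operator applied entrywise to square-summable families. -/
noncomputable def l2Map (A : E →L[𝕜] F) : ℓ²(ι, E) →L[𝕜] ℓ²(ι, F) :=
  lp.mapCLM 2 (fun _ => A) (norm_nonneg A) fun _ => le_rfl

/-- A unitary applied entrywise to square-summable families. -/
noncomputable def l2Congr (U : E ≃ₗᵢ[𝕜] F) : ℓ²(ι, E) ≃ₗᵢ[𝕜] ℓ²(ι, F) where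
  toLinearEquiv := .ofLinearMap (l2Map U.toLinearIsometry.toContinuousLinearMap).toLinearMap
    (l2Map U.symm.toLinearIsometry.toContinuousLinearMap).toLinearMap
    (by ext x n; exact U.apply_symm_apply _) (by ext x n; exact U.symm_apply_apply _)
  norm_map' x := by
    rw [← sq_eq_sq₀ (norm_nonneg _) (norm_nonneg _), norm_sq_eq_tsum_norm_sq,
      norm_sq_eq_tsum_norm_sq]
    exact tsum_congr fun n => congrArg (· ^ 2) (U.norm_map (x n))

variable (𝕜 ι E F) in
/-- The identification of `ℓ²(ι, E) ⊕ ℓ²(ι, F)` with `ℓ²(ι, E ⊕ F)`. -/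
noncomputable def l2Zip : WithLp 2 (ℓ²(ι, E) × ℓ²(ι, F)) ≃ₗᵢ[𝕜] ℓ²(ι, WithLp 2 (E × F)) where
  toLinearEquiv := .ofLinearMap
    { toFun z := ⟨fun n => .toLp 2 (z.fst n, z.snd n), memℓp_gen <| by
        simpa [WithLp.prod_norm_sq_eq_of_L2] using
          (summable_norm_sq z.fst).add (summable_norm_sq z.snd)⟩
      map_add' z w := by ext n; rfl
      map_smul' r z := by ext n; rfl }
    ((WithLp.linearEquiv 2 𝕜 _).symm.toLinearMap ∘ₗ
      (l2Map (WithLp.fstL 2 𝕜 E F)).toLinearMap.prod (l2Map (WithLp.sndL 2 𝕜 E F)).toLinearMap)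
    rfl rfl
  norm_map' z := by
    rw [← sq_eq_sq₀ (norm_nonneg _) (norm_nonneg _), WithLp.prod_norm_sq_eq_of_L2,
      norm_sq_eq_tsum_norm_sq, norm_sq_eq_tsum_norm_sq, norm_sq_eq_tsum_norm_sq,
      ← (summable_norm_sq z.fst).tsum_add (summable_norm_sq z.snd)]
    exact tsum_congr fun n => WithLp.prod_norm_sq_eq_of_L2 _

/-- The unitary `U` of `E ⊕ F` acting entrywise on `ℓ²(ι, E) ⊕ ℓ²(ι, F)`. -/
noncomputable def l2ProdCongr (U : WithLp 2 (E × F) ≃ₗᵢ[𝕜] WithLp 2 (E × F)) :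
    WithLp 2 (ℓ²(ι, E) × ℓ²(ι, F)) ≃ₗᵢ[𝕜] WithLp 2 (ℓ²(ι, E) × ℓ²(ι, F)) :=
  ((l2Zip 𝕜 ι E F).trans (l2Congr U)).trans (l2Zip 𝕜 ι E F).symm

theorem l2ProdCongr_l2Cons {U : WithLp 2 (E × F) ≃ₗᵢ[𝕜] WithLp 2 (E × F)} {a a' : E} {b b' : F}
    (hU : U (.toLp 2 (a, b)) = .toLp 2 (a', b')) (z : WithLp 2 (ℓ²(ℕ, E) × ℓ²(ℕ, F))) :
    l2ProdCongr U (.toLp 2 (l2Cons 𝕜 E (a, z.fst), l2Cons 𝕜 F (b, z.snd))) =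
      .toLp 2 (l2Cons 𝕜 E (a', (l2ProdCongr U z).fst), l2Cons 𝕜 F (b', (l2ProdCongr U z).snd)) := by
  refine (l2Zip 𝕜 ℕ E F).injective ?_
  rw [l2ProdCongr, LinearIsometryEquiv.trans_apply, LinearIsometryEquiv.apply_symm_apply]
  ext (_ | n)
  · exact hU
  · rfl

variable (𝕜 E F) in
/-- Prepending an entry to the first of two square-summable sequences. -/
noncomputable def consFst :
    E × WithLp 2 (ℓ²(ℕ, E) × ℓ²(ℕ, F)) →ₗ[𝕜] WithLp 2 (ℓ²(ℕ, E) × ℓ²(ℕ, F)) where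
  toFun z := .toLp 2 (l2Cons 𝕜 E (z.1, z.2.fst), z.2.snd)
  map_add' z w := congrArg (WithLp.toLp 2) <|
    Prod.ext (map_add (l2Cons 𝕜 E) (z.1, z.2.fst) (w.1, w.2.fst)) rfl
  map_smul' r z := congrArg (WithLp.toLp 2) <|
    Prod.ext (map_smul (l2Cons 𝕜 E) r (z.1, z.2.fst)) rfl

variable (𝕜 E F) in
/-- Prepending an entry to the second of two square-summable sequences. -/
noncomputable def consSnd :
    F × WithLp 2 (ℓ²(ℕ, E) × ℓ²(ℕ, F)) →ₗ[𝕜] WithLp 2 (ℓ²(ℕ, E) × ℓ²(ℕ, F)) where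
  toFun z := .toLp 2 (z.2.fst, l2Cons 𝕜 F (z.1, z.2.snd))
  map_add' z w := congrArg (WithLp.toLp 2) <|
    Prod.ext rfl (map_add (l2Cons 𝕜 F) (z.1, z.2.snd) (w.1, w.2.snd))
  map_smul' r z := congrArg (WithLp.toLp 2) <|
    Prod.ext rfl (map_smul (l2Cons 𝕜 F) r (z.1, z.2.snd))

theorem norm_sq_consFst (z : E × WithLp 2 (ℓ²(ℕ, E) × ℓ²(ℕ, F))) :
    ‖consFst 𝕜 E F z‖ ^ 2 = ‖z.1‖ ^ 2 + ‖z.2‖ ^ 2 := by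
  rw [WithLp.prod_norm_sq_eq_of_L2 z.2, ← add_assoc, ← norm_sq_l2Cons (𝕜 := 𝕜) (z.1, z.2.fst)]
  exact WithLp.prod_norm_sq_eq_of_L2 _

theorem norm_sq_consSnd (z : F × WithLp 2 (ℓ²(ℕ, E) × ℓ²(ℕ, F))) :
    ‖consSnd 𝕜 E F z‖ ^ 2 = ‖z.1‖ ^ 2 + ‖z.2‖ ^ 2 := by
  rw [WithLp.prod_norm_sq_eq_of_L2 z.2, add_left_comm, ← norm_sq_l2Cons (𝕜 := 𝕜) (z.1, z.2.snd)]
  exact WithLp.prod_norm_sq_eq_of_L2 _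

theorem exists_twisted_shifts (U : WithLp 2 (E × F) ≃ₗᵢ[𝕜] WithLp 2 (E × F)) :
    ∃ (S₁ : E × WithLp 2 (ℓ²(ℕ, E) × ℓ²(ℕ, F)) →ₗ[𝕜] WithLp 2 (ℓ²(ℕ, E) × ℓ²(ℕ, F)))
      (S₂ : F × WithLp 2 (ℓ²(ℕ, E) × ℓ²(ℕ, F)) →ₗ[𝕜] WithLp 2 (ℓ²(ℕ, E) × ℓ²(ℕ, F))),
      (∀ z, ‖S₁ z‖ ^ 2 = ‖z.1‖ ^ 2 + ‖z.2‖ ^ 2) ∧ (∀ z, ‖S₂ z‖ ^ 2 = ‖z.1‖ ^ 2 + ‖z.2‖ ^ 2) ∧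
      ∀ a b a' b' z, U (.toLp 2 (a, b)) = .toLp 2 (a', b') →
        S₁ (a, S₂ (b, z)) = S₂ (b', S₁ (a', z)) := by
  let W := l2ProdCongr (ι := ℕ) U
  refine ⟨W.toLinearEquiv.toLinearMap ∘ₗ consFst 𝕜 E F,
    consSnd 𝕜 E F ∘ₗ LinearMap.id.prodMap W.symm.toLinearEquiv.toLinearMap,
    fun z => ?_, fun z => ?_, fun a b a' b' z hU => ?_⟩
  · exact (congrArg (· ^ 2) (W.norm_map _)).trans (norm_sq_consFst z)
  · refine (norm_sq_consSnd _).trans ?_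
    exact congrArg (fun t => ‖z.1‖ ^ 2 + t ^ 2) (W.symm.norm_map z.2)
  · calc
      W (consFst 𝕜 E F (a, consSnd 𝕜 E F (b, W.symm z))) =
          consSnd 𝕜 E F (b', consFst 𝕜 E F (a', W (W.symm z))) :=
        l2ProdCongr_l2Cons hU (W.symm z)
      _ = consSnd 𝕜 E F (b', W.symm (W (consFst 𝕜 E F (a', z)))) := by
        rw [W.apply_symm_apply, W.symm_apply_apply]

end SquareSummable

section Coextension

section Schaeffer

variable {H D M : Type*} [NormedAddCommGroup H] [NormedSpace 𝕜 H]
  [NormedAddCommGroup D] [NormedSpace 𝕜 D] [NormedAddCommGroup M] [NormedSpace 𝕜 M]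

/-- The Schäffer-type isometry `(h, z) ↦ (T h, S (J h, z))` on `H ⊕ M`, for a defect map `J` of `T`
and an isometry `S : D ⊕ M → M`. -/
noncomputable def schaefferIsometry (T : H →ₗ[𝕜] H) (J : H →ₗ[𝕜] D) (S : D × M →ₗ[𝕜] M)
    (hTJ : ∀ h, ‖T h‖ ^ 2 + ‖J h‖ ^ 2 = ‖h‖ ^ 2)
    (hS : ∀ z, ‖S z‖ ^ 2 = ‖z.1‖ ^ 2 + ‖z.2‖ ^ 2) :
    WithLp 2 (H × M) →ₗᵢ[𝕜] WithLp 2 (H × M) where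
  toLinearMap := (WithLp.linearEquiv 2 𝕜 (H × M)).symm.toLinearMap ∘ₗ
    (T ∘ₗ LinearMap.fst 𝕜 H M).prod (S ∘ₗ J.prodMap LinearMap.id) ∘ₗ
      (WithLp.linearEquiv 2 𝕜 (H × M)).toLinearMap
  norm_map' z := by
    rw [← sq_eq_sq₀ (norm_nonneg _) (norm_nonneg _)]
    calc
      _ = ‖T z.fst‖ ^ 2 + ‖S (J z.fst, z.snd)‖ ^ 2 := WithLp.prod_norm_sq_eq_of_L2 _
      _ = ‖z‖ ^ 2 := by rw [hS, ← add_assoc, hTJ, WithLp.prod_norm_sq_eq_of_L2]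

variable (𝕜 H M) in
/-- The inclusion of the first summand of `H ⊕ M`. -/
noncomputable def l2Inl : H →ₗᵢ[𝕜] WithLp 2 (H × M) where
  toLinearMap := (WithLp.linearEquiv 2 𝕜 (H × M)).symm.toLinearMap ∘ₗ LinearMap.inl 𝕜 H M
  norm_map' := WithLp.norm_toLp_fst 2 H M

end Schaeffer

variable {H : Type u} [NormedAddCommGroup H] [InnerProductSpace 𝕜 H]

theorem exists_orthogonal_defects {T₁ T₂ : H →L[𝕜] H} (hT₁ : ‖T₁‖ ≤ 1) (hT₂ : ‖T₂‖ ≤ 1) :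
    ∃ (E : Type u) (_ : NormedAddCommGroup E) (_ : InnerProductSpace 𝕜 E) (_ : CompleteSpace E)
      (J₁ J₂ : H →ₗ[𝕜] E), (∀ h, ‖T₁ h‖ ^ 2 + ‖J₁ h‖ ^ 2 = ‖h‖ ^ 2) ∧
      (∀ h, ‖T₂ h‖ ^ 2 + ‖J₂ h‖ ^ 2 = ‖h‖ ^ 2) ∧ ∀ h h', inner 𝕜 (J₁ h) (J₂ h') = 0 := by
  obtain ⟨E₁, _, _, _, D₁, hD₁⟩ := exists_defect T₁.toLinearMap fun h =>
    (T₁.le_of_opNorm_le hT₁ h).trans_eq (one_mul _)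
  obtain ⟨E₂, _, _, _, D₂, hD₂⟩ := exists_defect T₂.toLinearMap fun h =>
    (T₂.le_of_opNorm_le hT₂ h).trans_eq (one_mul _)
  let e := (WithLp.linearEquiv 2 𝕜 (E₁ × E₂)).symm.toLinearMap
  refine ⟨WithLp 2 (E₁ × E₂), inferInstance, inferInstance, inferInstance,
    e ∘ₗ LinearMap.inl 𝕜 E₁ E₂ ∘ₗ D₁, e ∘ₗ LinearMap.inr 𝕜 E₁ E₂ ∘ₗ D₂,
    fun h => ?_, fun h => ?_, fun h h' => ?_⟩
  · rw [← hD₁ h, ← WithLp.norm_toLp_fst 2 E₁ E₂ (D₁ h)]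
    rfl
  · rw [← hD₂ h, ← WithLp.norm_toLp_snd 2 E₁ E₂ (D₂ h)]
    rfl
  · simp [e, WithLp.prod_inner_apply]

variable [CompleteSpace H]

theorem adjoint_l2Inl_apply {M : Type*} [NormedAddCommGroup M] [InnerProductSpace 𝕜 M]
    [CompleteSpace M] (z : WithLp 2 (H × M)) :
    adjoint (l2Inl 𝕜 H M).toContinuousLinearMap z = z.fst := by
  refine ext_inner_left 𝕜 fun h => ?_
  rw [adjoint_inner_right, WithLp.prod_inner_apply]
  exact (congrArg _ (inner_zero_left _)).trans (add_zero _)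

open scoped lp

theorem exists_commuting_isometric_coextension {T₁ T₂ : H →L[𝕜] H} (hT₁ : ‖T₁‖ ≤ 1)
    (hT₂ : ‖T₂‖ ≤ 1) (hcomm : T₁ ∘L T₂ = T₂ ∘L T₁) :
    ∃ (K : Type u) (_ : NormedAddCommGroup K) (_ : InnerProductSpace 𝕜 K) (_ : CompleteSpace K)
      (ι : H →ₗᵢ[𝕜] K) (V₁ V₂ : K →ₗᵢ[𝕜] K),
      (∀ k, V₁ (V₂ k) = V₂ (V₁ k)) ∧
      (adjoint ι.toContinuousLinearMap ∘L V₁.toContinuousLinearMap =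
        T₁ ∘L adjoint ι.toContinuousLinearMap) ∧
      (adjoint ι.toContinuousLinearMap ∘L V₂.toContinuousLinearMap =
        T₂ ∘L adjoint ι.toContinuousLinearMap) := by
  have hTT h : T₁ (T₂ h) = T₂ (T₁ h) := DFunLike.congr_fun hcomm h
  obtain ⟨E, _, _, _, J₁, J₂, hJ₁, hJ₂, horth⟩ := exists_orthogonal_defects hT₁ hT₂
  have hnorm h : ‖J₁ (T₂ h)‖ ^ 2 + ‖J₂ h‖ ^ 2 = ‖J₁ h‖ ^ 2 + ‖J₂ (T₁ h)‖ ^ 2 := by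
    have hJ₁T₂ := hJ₁ (T₂ h)
    rw [hTT] at hJ₁T₂
    linarith [hJ₁ h, hJ₂ h, hJ₂ (T₁ h)]
  obtain ⟨U, hU⟩ := exists_linearIsometryEquiv_prod (α₁ := J₁ ∘ₗ T₂.toLinearMap) (α₂ := J₂)
    (β₁ := J₁) (β₂ := J₂ ∘ₗ T₁.toLinearMap) hnorm (fun h h' => horth _ _)
    (fun h h' => inner_eq_zero_symm.1 (horth _ _))
  obtain ⟨S₁, S₂, hS₁, hS₂, hS⟩ := exists_twisted_shifts U
  let M := WithLp 2 (ℓ²(ℕ, E) × ℓ²(ℕ, E))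
  refine ⟨WithLp 2 (H × M), inferInstance, inferInstance, inferInstance, l2Inl 𝕜 H M,
    schaefferIsometry T₁.toLinearMap J₁ S₁ hJ₁ hS₁, schaefferIsometry T₂.toLinearMap J₂ S₂ hJ₂ hS₂,
    fun k => ?_, ?_, ?_⟩
  · exact congrArg (WithLp.toLp 2) (Prod.ext (hTT k.fst) (hS _ _ _ _ k.snd (hU k.fst)))
  · ext k
    simp only [comp_apply, adjoint_l2Inl_apply]
    rfl
  · ext k
    simp only [comp_apply, adjoint_l2Inl_apply]
    rfl

end Coextension

theorem isometric_dilation_without_eigenvalue_one_general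
    {H : Type u} [NormedAddCommGroup H] [InnerProductSpace 𝕜 H] [CompleteSpace H]
    {T₁ T₂ : H →L[𝕜] H} (hT₁ : ‖T₁‖ ≤ 1) (hT₂ : ‖T₂‖ ≤ 1) (hcomm : T₁ ∘L T₂ = T₂ ∘L T₁)
    (hT₁ev : ∀ x, T₁ x = x → x = 0) (hT₂ev : ∀ x, T₂ x = x → x = 0) :
    ∃ (G : Type u) (_ : NormedAddCommGroup G) (_ : InnerProductSpace 𝕜 G)
      (_ : CompleteSpace G) (ι : H →L[𝕜] G) (U₁ U₂ : G →L[𝕜] G),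
      (∀ h, ‖ι h‖ = ‖h‖) ∧ (∀ x, ‖U₁ x‖ = ‖x‖) ∧ (∀ x, ‖U₂ x‖ = ‖x‖) ∧ U₁ ∘L U₂ = U₂ ∘L U₁ ∧
      (∀ m n : ℕ, T₁ ^ m * T₂ ^ n = adjoint ι ∘L (U₁ ^ m * U₂ ^ n) ∘L ι) ∧
      (∀ x, U₁ x = x → x = 0) ∧ (∀ x, U₂ x = x → x = 0) := by
  obtain ⟨K, _, _, _, ι, V₁, V₂, hV, hι₁, hι₂⟩ :=
    exists_commuting_isometric_coextension hT₁ hT₂ hcomm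
  have hV' : V₁.toContinuousLinearMap ∘L V₂.toContinuousLinearMap =
      V₂.toContinuousLinearMap ∘L V₁.toContinuousLinearMap := ContinuousLinearMap.ext hV
  let F₁ := V₁.toContinuousLinearMap.eqLocus (1 : K →L[𝕜] K)
  let F₂ := V₂.toContinuousLinearMap.eqLocus (1 : K →L[𝕜] K)
  let N := F₁ᗮ ⊓ F₂ᗮ
  have hιN h : ι.toContinuousLinearMap h ∈ N :=
    ⟨apply_mem_orthogonal_eqLocus_one_of_coextension hι₁ hT₁ev h,
      apply_mem_orthogonal_eqLocus_one_of_coextension hι₂ hT₂ev h⟩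
  have hV₁N x (hx : x ∈ N) : V₁.toContinuousLinearMap x ∈ N :=
    ⟨apply_mem_orthogonal_eqLocus_one V₁.norm_toContinuousLinearMap_le rfl hx.1,
      apply_mem_orthogonal_eqLocus_one V₂.norm_toContinuousLinearMap_le hV'.symm hx.2⟩
  have hV₂N x (hx : x ∈ N) : V₂.toContinuousLinearMap x ∈ N :=
    ⟨apply_mem_orthogonal_eqLocus_one V₁.norm_toContinuousLinearMap_le hV' hx.1,
      apply_mem_orthogonal_eqLocus_one V₂.norm_toContinuousLinearMap_le rfl hx.2⟩
  have : CompleteSpace N :=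
    (F₁.isClosed_orthogonal.inter F₂.isClosed_orthogonal).completeSpace_coe
  refine ⟨N, inferInstance, inferInstance, this, ι.toContinuousLinearMap.codRestrict N hιN,
    V₁.toContinuousLinearMap.restrict hV₁N, V₂.toContinuousLinearMap.restrict hV₂N,
    fun h => ι.norm_map h, fun x => V₁.norm_map x, fun x => V₂.norm_map x, ?_, ?_,
    fun x hx => ?_, fun x hx => ?_⟩
  · ext x
    exact hV x
  · exact pow_mul_pow_eq_adjoint_comp (fun h => ι.norm_map h)
      (adjoint_codRestrict_comp_restrict hι₁ hιN hV₁N)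
      (adjoint_codRestrict_comp_restrict hι₂ hιN hV₂N)
  · exact Subtype.ext (inner_self_eq_zero.1 (x.2.1 x (congrArg Subtype.val hx)))
  · exact Subtype.ext (inner_self_eq_zero.1 (x.2.2 x (congrArg Subtype.val hx)))

/-- Two commuting contractions on a complex Hilbert space, neither of which has `1`
as an eigenvalue, have a commuting isometric dilation `(G, U₁, U₂)` in which neither
isometry has `1` as an eigenvalue. -/
theorem isometric_dilation_without_eigenvalue_one
    {H : Type} [NormedAddCommGroup H] [InnerProductSpace ℂ H] [CompleteSpace H]
    (T₁ T₂ : H →L[ℂ] H)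
    (hT₁contr : ‖T₁‖ ≤ 1) (hT₂contr : ‖T₂‖ ≤ 1)
    (hcomm : T₁ ∘L T₂ = T₂ ∘L T₁)
    (hT₁ev : ∀ x : H, T₁ x = x → x = 0)
    (hT₂ev : ∀ x : H, T₂ x = x → x = 0) :
    ∃ (G : Type) (_ : NormedAddCommGroup G) (_ : InnerProductSpace ℂ G)
      (_ : CompleteSpace G) (ι : H →L[ℂ] G) (U₁ U₂ : G →L[ℂ] G),
      -- `ι` is an isometric embedding of `H` into `G`
      (∀ h : H, ‖ι h‖ = ‖h‖) ∧
      -- `U₁`, `U₂` are isometries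
      (∀ x : G, ‖U₁ x‖ = ‖x‖) ∧ (∀ x : G, ‖U₂ x‖ = ‖x‖) ∧
      -- which commute
      U₁ ∘L U₂ = U₂ ∘L U₁ ∧
      -- dilation property: `T₁^m T₂^n = P_H U₁^m U₂^n |_H`
      (∀ m n : ℕ, T₁ ^ m * T₂ ^ n = adjoint ι ∘L (U₁ ^ m * U₂ ^ n) ∘L ι) ∧
      -- neither `U₁` nor `U₂` has `1` as an eigenvalue
      (∀ x : G, U₁ x = x → x = 0) ∧ (∀ x : G, U₂ x = x → x = 0) :=
  isometric_dilation_without_eigenvalue_one_general hT₁contr hT₂contr hcomm hT₁ev hT₂ev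
end

section
/- Let Ω be a set, for each i ∈ Ω let S_i be a commensurable unital subsemigroup of ℝ₊, and let S be the semigroup of all finitely supported functions s : Ω → ℝ₊ with s(j) ∈ S_j for all j. Let T = {T_s}_{s∈S} be a doubly commuting semigroup of contractions on a complex Hilbert space H. Then T has a regular unitary dilation, and its minimal regular unitary dilation is a doubly commuting family. -/
open ContinuousLinearMap

/-- For `s : Ω → ℝ`, the positive part `s₊ : j ↦ max (s j) 0`. -/
noncomputable def posPart' {Ω : Type*} (s : Ω → ℝ) : Ω → ℝ := fun j => max (s j) 0

/-- For `s : Ω → ℝ`, the negative part `s₋ = s₊ - s`. -/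
noncomputable def negPart' {Ω : Type*} (s : Ω → ℝ) : Ω → ℝ := posPart' s - s

/-- A subset of `ℝ` is a commensurable unital subsemigroup of `ℝ₊` if it contains `0`,
is closed under addition, consists of nonnegative reals, and any finitely many of its
elements are natural multiples of a common element. -/
def IsCommensurableSubsemigroup (A : Set ℝ) : Prop :=
  0 ∈ A ∧ (∀ x ∈ A, ∀ y ∈ A, x + y ∈ A) ∧ (∀ x ∈ A, 0 ≤ x) ∧
    ∀ (N : ℕ) (f : Fin N → ℝ), (∀ k, f k ∈ A) →
      ∃ s₀ ∈ A, ∃ a : Fin N → ℕ, ∀ k, f k = (a k : ℝ) * s₀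

/-- The semigroup `S = Σᵢ Sᵢ` of finitely supported functions `s : Ω → ℝ` with
`s j ∈ S j` for every `j`. -/
def SumSemigroup {Ω : Type*} (S : Ω → Set ℝ) : Set (Ω → ℝ) :=
  {s | (Function.support s).Finite ∧ ∀ j, s j ∈ S j}

/-- `eFun i r`: the function supported at `i` with value `r` (the element `eᵢ(r)`). -/
def eFun {Ω : Type*} [DecidableEq Ω] (i : Ω) (r : ℝ) : Ω → ℝ :=
  fun j => if j = i then r else 0

/-!
Naimark's dilation theorem reduces the claim to the positive definiteness of the function
`g ↦ T(g⁻)* T(g⁺)` on the group generated by `S`. Finitely many elements of this group involve only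
finitely many coordinates, and on a single coordinate commensurability turns the kernel into the
Toeplitz kernel `t*^(m - n) t^(n - m)` (truncated subtraction) of one contraction `t`. This kernel
is a finite sum of rank-one kernels `b(x)* b(y)`, because `1 - t* t = d* d` for the defect operator
`d = √(1 - t* t)`, and `d` lies in the von Neumann algebra generated by `t`. Double commutation
makes the factors belonging to different coordinates commute, so the pointwise product of the
coordinate kernels is again such a sum. Finally, commuting unitaries commute with each other's
adjoints, so the dilation doubly commutes.
-/

open scoped ComplexOrder InnerProductSpace Matrix Pointwise

section Bicommutant

variable {R A : Type*} [CommSemiring R] [StarRing R] [Semiring A] [StarRing A] [Algebra R A]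
  [StarModule R A]

variable (R) in
/-- The bicommutant of the star-closure of `s`. It stands in for the von Neumann algebra generated
by `s`, and makes sense in every star algebra. -/
def bicommutant (s : Set A) : StarSubalgebra R A :=
  StarSubalgebra.centralizer R (StarSubalgebra.centralizer R s : Set A)

theorem subset_bicommutant (s : Set A) : s ⊆ bicommutant R s :=
  (StarAlgebra.subset_adjoin R s).trans (StarAlgebra.adjoin_le_centralizer_centralizer R s)

theorem bicommutant_mono {s t : Set A} (h : s ⊆ t) : bicommutant R s ≤ bicommutant R t :=
  StarSubalgebra.centralizer_le _ _ _ (StarSubalgebra.centralizer_le _ _ _ h)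

theorem commute_of_mem_bicommutant {s t : Set A} (h : s ⊆ StarSubalgebra.centralizer R t) {u v : A}
    (hu : u ∈ bicommutant R s) (hv : v ∈ bicommutant R t) : Commute u v := by
  have hle : bicommutant R t ≤ StarSubalgebra.centralizer R s :=
    StarSubalgebra.centralizer_le _ _ _ h
  exact ((StarSubalgebra.mem_centralizer_iff R).1 hu v (hle hv)).1.symm

end Bicommutant

section GramCone

variable {A X : Type*}

/-- The additive monoid of sums of rank-one kernels `(x, y) ↦ star (b x) * b y` with `b` valued in
`M`, i.e. of the kernels `Bᴴ * B` with `B` a matrix with finitely many rows and entries in `M`. -/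
def gramCone [NonUnitalNonAssocSemiring A] [Star A] (M : Set A) : AddSubmonoid (Matrix X X A) :=
  AddSubmonoid.closure {K | ∃ b : X → A, (∀ x, b x ∈ M) ∧ Matrix.vecMulVec (star b) b = K}

theorem vecMulVec_star_self_mem_gramCone [NonUnitalNonAssocSemiring A] [Star A] {M : Set A}
    {b : X → A} (hb : ∀ x, b x ∈ M) : Matrix.vecMulVec (star b) b ∈ gramCone M :=
  AddSubmonoid.subset_closure ⟨b, hb, rfl⟩

theorem gramCone_mono [NonUnitalNonAssocSemiring A] [Star A] {M N : Set A} (h : M ⊆ N) :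
    gramCone (X := X) M ≤ gramCone N :=
  AddSubmonoid.closure_mono fun _ ⟨b, hb, hK⟩ => ⟨b, fun x => h (hb x), hK⟩

theorem hadamard_mem_gramCone [NonUnitalSemiring A] [StarRing A] {M N : Set A}
    (hMN : ∀ u ∈ M, ∀ v ∈ N, Commute u v ∧ Commute u (star v)) {K L : Matrix X X A}
    (hK : K ∈ gramCone M) (hL : L ∈ gramCone N) : K ⊙ L ∈ gramCone (M * N) := by
  induction hK using AddSubmonoid.closure_induction with
  | zero => simp
  | add K₁ K₂ _ _ h₁ h₂ => simpa [Matrix.add_hadamard] using add_mem h₁ h₂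
  | mem K hK =>
    obtain ⟨b, hb, rfl⟩ := hK
    induction hL using AddSubmonoid.closure_induction with
    | zero => simp
    | add L₁ L₂ _ _ h₁ h₂ => simpa [Matrix.hadamard_add] using add_mem h₁ h₂
    | mem L hL =>
      obtain ⟨c, hc, rfl⟩ := hL
      convert vecMulVec_star_self_mem_gramCone fun x => Set.mul_mem_mul (hb x) (hc x) using 1
      ext x y
      have hbc : star (b x) * star (c x) = star (b x * c x) := by
        rw [(hMN _ (hb x) _ (hc x)).1.eq, star_mul]
      have hbc' : b y * star (c x) = star (c x) * b y := (hMN _ (hb y) _ (hc x)).2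
      calc star (b x) * b y * (star (c x) * c y)
          = star (b x) * (b y * star (c x)) * c y := by simp only [mul_assoc]
        _ = star (b x) * star (c x) * (b y * c y) := by simp only [hbc', mul_assoc]
        _ = star (b x * c x) * (b y * c y) := by rw [hbc]

theorem posSemidef_of_mem_gramCone [Ring A] [PartialOrder A] [StarRing A] [StarOrderedRing A]
    [Finite X] {M : Set A} {K : Matrix X X A} (hK : K ∈ gramCone M) : K.PosSemidef := by
  induction hK using AddSubmonoid.closure_induction with
  | zero => exact .zero
  | add _ _ _ _ h₁ h₂ => exact h₁.add h₂
  | mem _ hK =>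
    obtain ⟨b, -, rfl⟩ := hK
    exact Matrix.posSemidef_vecMulVec_star_self b

theorem posSemidef_of_forall_finset_submatrix [Ring A] [PartialOrder A] [StarRing A]
    {K : Matrix X X A}
    (hK : ∀ s : Finset X, (K.submatrix ((↑) : s → X) (↑)).PosSemidef) : K.PosSemidef := by
  classical
  refine ⟨Matrix.IsHermitian.ext fun x y => ?_, fun f => ?_⟩
  · exact (hK {x, y}).isHermitian.apply ⟨x, by simp⟩ ⟨y, by simp⟩
  · have hsum (g : X → X → A) :
        ∑ x : f.support, ∑ y : f.support, g x y = ∑ x ∈ f.support, ∑ y ∈ f.support, g x y := by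
      simp_rw [f.support.sum_coe_sort (g _)]
      exact f.support.sum_coe_sort fun x => ∑ y ∈ f.support, g x y
    have hf := (hK f.support).dotProduct_mulVec_nonneg fun x => f x
    simp only [dotProduct, Matrix.mulVec, Finset.mul_sum, ← mul_assoc] at hf
    exact hf.trans_eq (hsum fun x y => star (f x) * K x y * f y)

end GramCone

section Toeplitz

theorem pow_sub_mul_pow_sub {R : Type*} [Ring R] (a b : R) (m n : ℕ) :
    a ^ (m - n) * b ^ (n - m) = a ^ m * b ^ n +
      ∑ k ∈ Finset.range (min m n), a ^ (m - 1 - k) * (1 - a * b) * b ^ (n - 1 - k) := by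
  induction m generalizing n with
  | zero => simp
  | succ m ih =>
    cases n with
    | zero => simp
    | succ n =>
      simp only [Nat.add_sub_add_right, ih, Nat.add_min_add_right, Finset.sum_range_succ',
        Nat.add_sub_cancel, Nat.sub_zero]
      simp only [Nat.sub_sub, Nat.add_comm 1, pow_succ a, pow_succ' b]
      noncomm_ring

theorem exists_mem_bicommutant_star_mul_self {A : Type*} [CStarAlgebra A] [PartialOrder A]
    [StarOrderedRing A] {t : A} (ht : ‖t‖ ≤ 1) :
    ∃ d ∈ bicommutant ℂ {t}, star d * d = 1 - star t * t := by
  have h0 : 0 ≤ 1 - star t * t := by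
    rw [sub_nonneg, ← CStarAlgebra.norm_le_one_iff_of_nonneg _ (star_mul_self_nonneg t),
      CStarRing.norm_star_mul_self]
    exact mul_le_one₀ ht (norm_nonneg t) ht
  have hmem : 1 - star t * t ∈ bicommutant ℂ {t} := by
    have := subset_bicommutant (R := ℂ) {t} rfl
    exact sub_mem (one_mem _) (mul_mem (star_mem this) this)
  have hd : star (CFC.sqrt (1 - star t * t)) = CFC.sqrt (1 - star t * t) :=
    (CFC.sqrt_nonneg _).isSelfAdjoint
  refine ⟨CFC.sqrt (1 - star t * t), ?_, by rw [hd, CFC.sqrt_mul_sqrt_self _ h0]⟩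
  refine (StarSubalgebra.mem_centralizer_iff ℂ).2 fun g hg => ?_
  have hcomm := (StarSubalgebra.mem_centralizer_iff ℂ).1 hmem g hg
  exact ⟨(Commute.cfcₙ_nnreal (Commute.symm hcomm.1) _).symm,
    (Commute.cfcₙ_nnreal (Commute.symm hcomm.2) _).symm⟩

theorem toeplitz_mem_gramCone {A X : Type*} [CStarAlgebra A] [PartialOrder A] [StarOrderedRing A]
    [Finite X] {t : A} (ht : ‖t‖ ≤ 1) (m : X → ℕ) :
    Matrix.of (fun x y => star t ^ (m x - m y) * t ^ (m y - m x)) ∈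
      gramCone (bicommutant ℂ {t} : Set A) := by
  obtain ⟨d, hd, hdt⟩ := exists_mem_bicommutant_star_mul_self ht
  obtain ⟨N, hN⟩ := (Set.finite_range m).bddAbove
  have htt : t ∈ bicommutant ℂ {t} := subset_bicommutant {t} rfl
  let b (k : ℕ) (x : X) : A := if k < m x then d * t ^ (m x - 1 - k) else 0
  have hb (k : ℕ) (x : X) : b k x ∈ bicommutant ℂ {t} := by
    unfold b
    split_ifs
    exacts [mul_mem hd (pow_mem htt _), zero_mem _]
  have hsum : Matrix.of (fun x y => star t ^ (m x - m y) * t ^ (m y - m x)) =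
      Matrix.vecMulVec (star fun x => t ^ m x) (fun x => t ^ m x) +
        ∑ k ∈ Finset.range N, Matrix.vecMulVec (star (b k)) (b k) := by
    ext x y
    have hxy : (Finset.range N).filter (fun k => k < m x ∧ k < m y) =
        Finset.range (min (m x) (m y)) := by
      have := hN ⟨x, rfl⟩
      grind
    simp only [Matrix.of_apply, Matrix.add_apply, Matrix.sum_apply, Matrix.vecMulVec_apply,
      Pi.star_apply, star_pow, pow_sub_mul_pow_sub, ← hxy, Finset.sum_filter, ← hdt]
    congr! 2 with k
    by_cases hx : k < m x <;> by_cases hy : k < m y <;> simp [b, hx, hy, mul_assoc]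
  rw [hsum]
  exact add_mem (vecMulVec_star_self_mem_gramCone fun x => pow_mem htt _)
    (sum_mem fun k _ => vecMulVec_star_self_mem_gramCone (hb k))

end Toeplitz

section RegularKernel

/-- The kernel `(x, y) ↦ T(g⁻)* T(g⁺)` with `g = f y - f x`, whose positivity for all families `f`
in a group characterizes the existence of a regular unitary dilation of `T`. -/
def regularKernel {G A X : Type*} [Lattice G] [AddGroup G] [Mul A] [Star A] (T : G → A)
    (f : X → G) : Matrix X X A :=
  Matrix.of fun x y => star (T (f y - f x)⁻) * T (f y - f x)⁺

theorem posPart_nsmul_sub_nsmul {G : Type*} [AddCommGroup G] [LinearOrder G] [IsOrderedAddMonoid G]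
    {r : G} (hr : 0 ≤ r) (m n : ℕ) : (m • r - n • r)⁺ = (m - n) • r := by
  rcases le_total n m with h | h
  · rw [sub_nsmul r h, ← sub_eq_add_neg, posPart_eq_self, sub_nonneg]
    exact nsmul_le_nsmul_left hr h
  · rw [Nat.sub_eq_zero_of_le h, zero_nsmul, posPart_eq_zero, sub_nonpos]
    exact nsmul_le_nsmul_left hr h

theorem mem_addSubgroupClosure_iff_exists_sub {G : Type*} [AddCommGroup G] {M : AddSubmonoid G}
    {g : G} : g ∈ AddSubgroup.closure (M : Set G) ↔ ∃ a ∈ M, ∃ b ∈ M, g = a - b := by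
  rw [← AddSubgroup.mem_toAddSubmonoid, AddSubgroup.closure_toAddSubmonoid,
    AddSubmonoid.closure_union, AddSubmonoid.closure_neg, AddSubmonoid.closure_eq,
    AddSubmonoid.mem_sup]
  constructor
  · rintro ⟨a, ha, b, hb, rfl⟩
    exact ⟨a, ha, -b, hb, by abel⟩
  · rintro ⟨a, ha, b, hb, rfl⟩
    exact ⟨a, ha, -b, by simpa, by abel⟩

theorem exists_forall_add_mem {G X : Type*} [AddCommGroup G] [Finite X] {M : AddSubmonoid G}
    {f : X → G} (hf : ∀ x, f x ∈ AddSubgroup.closure (M : Set G)) : ∃ c, ∀ x, f x + c ∈ M := by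
  classical
  have := Fintype.ofFinite X
  choose a ha b hb hab using fun x => mem_addSubgroupClosure_iff_exists_sub.1 (hf x)
  refine ⟨∑ x, b x, fun x => ?_⟩
  rw [← Finset.add_sum_erase _ b (Finset.mem_univ x), hab, ← add_assoc, sub_add_cancel]
  exact add_mem (ha x) (sum_mem fun y _ => hb y)

end RegularKernel

namespace IsCommensurableSubsemigroup

variable {M : Set ℝ} {X : Type*} (hM : IsCommensurableSubsemigroup M)
include hM

theorem exists_eq_nsmul [Finite X] {f : X → ℝ} (hf : ∀ x, f x ∈ M) :
    ∃ r ∈ M, ∃ m : X → ℕ, ∀ x, f x = m x • r := by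
  let e := Finite.equivFin X
  obtain ⟨r, hr, m, hm⟩ := hM.2.2.2 _ (f ∘ e.symm) fun _ => hf _
  exact ⟨r, hr, m ∘ e, fun x => by simpa using hm (e x)⟩

/-- A commensurable unital subsemigroup of `ℝ₊` as a bundled submonoid of `ℝ`. -/
def toAddSubmonoid : AddSubmonoid ℝ where
  carrier := M
  zero_mem' := hM.1
  add_mem' := fun ha hb => hM.2.1 _ ha _ hb

theorem exists_add_eq_nsmul [Finite X] {f : X → ℝ} (hf : ∀ x, f x ∈ AddSubgroup.closure M) :
    ∃ r ∈ M, ∃ c, ∃ m : X → ℕ, ∀ x, f x + c = m x • r := by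
  obtain ⟨c, hc⟩ := exists_forall_add_mem (M := hM.toAddSubmonoid) hf
  obtain ⟨r, hr, m, hm⟩ := hM.exists_eq_nsmul hc
  exact ⟨r, hr, c, m, hm⟩

theorem posPart_mem {g : ℝ} (hg : g ∈ AddSubgroup.closure M) : g⁺ ∈ M := by
  obtain ⟨r, hr, c, m, hm⟩ := hM.exists_add_eq_nsmul (f := ![g, 0])
    (Fin.forall_fin_two.2 ⟨hg, zero_mem _⟩)
  have hgr : g = m 0 • r - m 1 • r := by simp [← hm]
  rw [hgr, posPart_nsmul_sub_nsmul (hM.2.2.1 r hr)]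
  exact nsmul_mem (S := hM.toAddSubmonoid) hr _

theorem regularKernel_mem_gramCone {A : Type*} [CStarAlgebra A] [PartialOrder A]
    [StarOrderedRing A] [Finite X] {W : ℝ → A} (hW0 : W 0 = 1)
    (hWadd : ∀ a ∈ M, ∀ b ∈ M, W (a + b) = W a * W b) (hW : ∀ a ∈ M, ‖W a‖ ≤ 1) {f : X → ℝ}
    (hf : ∀ x, f x ∈ AddSubgroup.closure M) :
    regularKernel W f ∈ gramCone (bicommutant ℂ (W '' M) : Set A) := by
  obtain ⟨r, hr, c, m, hm⟩ := hM.exists_add_eq_nsmul hf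
  have hpow (n : ℕ) : W (n • r) = W r ^ n := by
    induction n with
    | zero => simpa
    | succ n ih =>
      rw [succ_nsmul, pow_succ, hWadd _ (nsmul_mem (S := hM.toAddSubmonoid) hr n) _ hr, ih]
  have hpos (x y : X) : (f y - f x)⁺ = (m y - m x) • r := by
    rw [← posPart_nsmul_sub_nsmul (hM.2.2.1 r hr), ← hm, ← hm, add_sub_add_right_eq_sub]
  have hneg (x y : X) : (f y - f x)⁻ = (m x - m y) • r := by
    rw [← posPart_neg, neg_sub, hpos]
  have hK : regularKernel W f =
      Matrix.of fun x y => star (W r) ^ (m x - m y) * W r ^ (m y - m x) := by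
    ext x y
    simp only [regularKernel, Matrix.of_apply, hpos, hneg, hpow, star_pow]
  rw [hK]
  exact gramCone_mono (bicommutant_mono (by simpa using ⟨r, hr, rfl⟩))
    (toeplitz_mem_gramCone (hW r hr) m)

end IsCommensurableSubsemigroup

section SumSemigroup

variable {Ω : Type*} {S : Ω → Set ℝ}

theorem posPart'_eq (s : Ω → ℝ) : posPart' s = s⁺ := rfl

theorem negPart'_eq (s : Ω → ℝ) : negPart' s = s⁻ := by
  rw [negPart', posPart'_eq, sub_eq_iff_eq_add, ← sub_eq_iff_eq_add', posPart_sub_negPart]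

theorem eFun_eq_single [DecidableEq Ω] (i : Ω) (r : ℝ) : eFun i r = Pi.single i r := by
  ext j
  rw [eFun, Pi.single_apply]

theorem indicator_insert_eq_eFun_add [DecidableEq Ω] {i : Ω} {F : Set Ω} (hi : i ∉ F) (s : Ω → ℝ) :
    (insert i F).indicator s = eFun i (s i) + F.indicator s := by
  rw [eFun_eq_single, ← Set.indicator_singleton, Set.insert_eq]
  exact Set.indicator_union_of_disjoint (Set.disjoint_singleton_left.2 hi) s

theorem support_posPart_subset (s : Ω → ℝ) : s⁺.support ⊆ s.support := fun j => by
  simpa only [Function.mem_support, Pi.posPart_apply] using mt fun h => by simp [h]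

theorem support_negPart_subset (s : Ω → ℝ) : s⁻.support ⊆ s.support := by
  simpa using support_posPart_subset (-s)

/-- The semigroup `S = Σᵢ Sᵢ` as a bundled submonoid of `Ω → ℝ`. -/
def sumSubmonoid (hS : ∀ i, IsCommensurableSubsemigroup (S i)) : AddSubmonoid (Ω → ℝ) where
  carrier := SumSemigroup S
  zero_mem' := ⟨by simp, fun i => (hS i).1⟩
  add_mem' := fun {a b} ha hb =>
    ⟨(ha.1.union hb.1).subset (Function.support_add a b), fun i => (hS i).2.1 _ (ha.2 i) _ (hb.2 i)⟩

variable (hS : ∀ i, IsCommensurableSubsemigroup (S i))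
include hS

theorem eFun_mem_sumSubmonoid [DecidableEq Ω] {i : Ω} {r : ℝ} (hr : r ∈ S i) :
    eFun i r ∈ sumSubmonoid hS := by
  rw [eFun_eq_single]
  refine ⟨(Set.finite_singleton i).subset Pi.support_single_subset, fun j => ?_⟩
  obtain rfl | hj := eq_or_ne j i
  · simpa
  · simpa [hj] using (hS j).1

theorem indicator_mem_sumSubmonoid {s : Ω → ℝ} (hs : s ∈ sumSubmonoid hS) (F : Set Ω) :
    F.indicator s ∈ sumSubmonoid hS := by
  refine ⟨hs.1.subset (by simp), fun j => ?_⟩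
  by_cases hj : j ∈ F
  · simpa [hj] using hs.2 j
  · simpa [hj] using (hS j).1

theorem finite_support_of_mem_closure_sumSubmonoid {g : Ω → ℝ}
    (hg : g ∈ AddSubgroup.closure (sumSubmonoid hS : Set (Ω → ℝ))) : g.support.Finite := by
  obtain ⟨a, ha, b, hb, rfl⟩ := mem_addSubgroupClosure_iff_exists_sub.1 hg
  exact (ha.1.union hb.1).subset (Function.support_sub a b)

theorem apply_mem_closure_of_mem_closure_sumSubmonoid {g : Ω → ℝ}
    (hg : g ∈ AddSubgroup.closure (sumSubmonoid hS : Set (Ω → ℝ))) (i : Ω) :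
    g i ∈ AddSubgroup.closure (S i) := by
  obtain ⟨a, ha, b, hb, rfl⟩ := mem_addSubgroupClosure_iff_exists_sub.1 hg
  exact sub_mem (AddSubgroup.subset_closure (ha.2 i)) (AddSubgroup.subset_closure (hb.2 i))

theorem posPart_mem_sumSubmonoid {g : Ω → ℝ}
    (hg : g ∈ AddSubgroup.closure (sumSubmonoid hS : Set (Ω → ℝ))) : g⁺ ∈ sumSubmonoid hS :=
  ⟨(finite_support_of_mem_closure_sumSubmonoid hS hg).subset (support_posPart_subset g),
    fun i => (hS i).posPart_mem (apply_mem_closure_of_mem_closure_sumSubmonoid hS hg i)⟩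

theorem negPart_mem_sumSubmonoid {g : Ω → ℝ}
    (hg : g ∈ AddSubgroup.closure (sumSubmonoid hS : Set (Ω → ℝ))) : g⁻ ∈ sumSubmonoid hS := by
  simpa using posPart_mem_sumSubmonoid hS (neg_mem hg)

end SumSemigroup

section PositiveDefinite

/-- A doubly commuting semigroup of contractions over `S = Σᵢ Sᵢ`, with values in a C⋆-algebra;
the values of `T` off `S` are irrelevant. -/
structure IsDoublyCommutingContractionSemigroup {Ω A : Type*} [DecidableEq Ω] [CStarAlgebra A]
    (S : Ω → Set ℝ) (T : (Ω → ℝ) → A) : Prop where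
  map_zero : T 0 = 1
  map_add : ∀ a ∈ SumSemigroup S, ∀ b ∈ SumSemigroup S, T (a + b) = T a * T b
  norm_le_one : ∀ s ∈ SumSemigroup S, ‖T s‖ ≤ 1
  commute_star : ∀ i j, i ≠ j → ∀ r ∈ S i, ∀ q ∈ S j, Commute (T (eFun j q)) (star (T (eFun i r)))

/-- The von Neumann algebra generated by the operators `T (eᵢ(r))` with `i ∈ F` and `r ∈ Sᵢ`. -/
def coordinateAlgebra {Ω A : Type*} [DecidableEq Ω] [CStarAlgebra A] (S : Ω → Set ℝ)
    (T : (Ω → ℝ) → A) (F : Set Ω) : StarSubalgebra ℂ A :=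
  bicommutant ℂ {a | ∃ i ∈ F, ∃ r ∈ S i, T (eFun i r) = a}

variable {Ω A : Type*} [DecidableEq Ω] [CStarAlgebra A] {S : Ω → Set ℝ} {T : (Ω → ℝ) → A}

theorem coordinateAlgebra_mono {F F' : Set Ω} (h : F ⊆ F') :
    coordinateAlgebra S T F ≤ coordinateAlgebra S T F' :=
  bicommutant_mono fun _ ⟨i, hi, r, hr⟩ => ⟨i, h hi, r, hr⟩

theorem map_eFun_mem_coordinateAlgebra {F : Set Ω} {i : Ω} (hi : i ∈ F) {r : ℝ} (hr : r ∈ S i) :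
    T (eFun i r) ∈ coordinateAlgebra S T F :=
  subset_bicommutant _ ⟨i, hi, r, hr, rfl⟩

namespace IsDoublyCommutingContractionSemigroup

variable (hT : IsDoublyCommutingContractionSemigroup S T)
  (hS : ∀ i, IsCommensurableSubsemigroup (S i))
include hT hS

theorem commute_of_disjoint {F F' : Set Ω} (hF : Disjoint F F') {u v : A}
    (hu : u ∈ coordinateAlgebra S T F) (hv : v ∈ coordinateAlgebra S T F') : Commute u v := by
  refine commute_of_mem_bicommutant ?_ hu hv
  rintro _ ⟨i, hi, r, hr, rfl⟩
  refine (StarSubalgebra.mem_centralizer_iff ℂ).2 ?_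
  rintro _ ⟨j, hj, q, hq, rfl⟩
  have hij : i ≠ j := hF.ne_of_mem hi hj
  have hr' : eFun i r ∈ SumSemigroup S := eFun_mem_sumSubmonoid hS hr
  have hq' : eFun j q ∈ SumSemigroup S := eFun_mem_sumSubmonoid hS hq
  refine ⟨?_, (hT.commute_star j i hij.symm q hq r hr).symm⟩
  rw [← hT.map_add _ hq' _ hr', add_comm, hT.map_add _ hr' _ hq']

theorem map_indicator_insert {i : Ω} {F : Set Ω} (hi : i ∉ F) {s : Ω → ℝ}
    (hs : s ∈ sumSubmonoid hS) :
    T ((insert i F).indicator s) = T (eFun i (s i)) * T (F.indicator s) := by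
  rw [indicator_insert_eq_eFun_add hi, hT.map_add _ (eFun_mem_sumSubmonoid hS (hs.2 i)) _
    (indicator_mem_sumSubmonoid hS hs F)]

theorem map_indicator_mem_coordinateAlgebra (F : Finset Ω) {s : Ω → ℝ}
    (hs : s ∈ sumSubmonoid hS) : T ((F : Set Ω).indicator s) ∈ coordinateAlgebra S T F := by
  induction F using Finset.induction_on with
  | empty =>
    rw [Finset.coe_empty, Set.indicator_empty', hT.map_zero]
    exact one_mem _
  | insert i F hi ih =>
    rw [Finset.coe_insert, hT.map_indicator_insert hS (by simpa) hs]
    exact mul_mem (map_eFun_mem_coordinateAlgebra (by simp) (hs.2 i))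
      (coordinateAlgebra_mono (by simp) ih)

theorem star_map_mul_map_indicator_insert {i : Ω} {F : Finset Ω} (hi : i ∉ F) {g : Ω → ℝ}
    (hg : g ∈ AddSubgroup.closure (sumSubmonoid hS : Set (Ω → ℝ))) :
    star (T ((insert i F : Set Ω).indicator g⁻)) * T ((insert i F : Set Ω).indicator g⁺) =
      (star (T (eFun i (g i)⁻)) * T (eFun i (g i)⁺)) *
        (star (T ((F : Set Ω).indicator g⁻)) * T ((F : Set Ω).indicator g⁺)) := by
  have hpos := posPart_mem_sumSubmonoid hS hg
  have hneg := negPart_mem_sumSubmonoid hS hg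
  have hiF : i ∉ (F : Set Ω) := by simpa
  have hmem {r : ℝ} (hr : r ∈ S i) : T (eFun i r) ∈ coordinateAlgebra S T {i} :=
    map_eFun_mem_coordinateAlgebra (Set.mem_singleton i) hr
  have hcomm : Commute (star (T (eFun i (g i)⁻)) * T (eFun i (g i)⁺))
      (star (T ((F : Set Ω).indicator g⁻))) :=
    hT.commute_of_disjoint hS (Set.disjoint_singleton_left.2 hiF)
      (mul_mem (star_mem (hmem (hneg.2 i))) (hmem (hpos.2 i)))
      (star_mem (hT.map_indicator_mem_coordinateAlgebra hS F hneg))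
  rw [hT.map_indicator_insert hS hiF hpos, hT.map_indicator_insert hS hiF hneg, star_mul,
    ← mul_assoc _ (star _), hcomm.eq]
  simp only [Pi.posPart_apply, Pi.negPart_apply, mul_assoc]

variable {X : Type*} {f : X → Ω → ℝ}
  (hf : ∀ x, f x ∈ AddSubgroup.closure (sumSubmonoid hS : Set (Ω → ℝ)))
include hf

theorem regularKernel_insert {i : Ω} {F : Finset Ω} (hi : i ∉ F) :
    regularKernel (fun s => T ((insert i F : Set Ω).indicator s)) f =
      regularKernel (fun r => T (eFun i r)) (fun x => f x i) ⊙
        regularKernel (fun s => T ((F : Set Ω).indicator s)) f :=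
  Matrix.ext fun x y =>
    hT.star_map_mul_map_indicator_insert hS hi (sub_mem (hf y) (hf x))

variable [PartialOrder A] [StarOrderedRing A]

theorem regularKernel_coordinate_mem_gramCone [Finite X] (i : Ω) :
    regularKernel (fun r => T (eFun i r)) (fun x => f x i) ∈
      gramCone (coordinateAlgebra S T {i} : Set A) := by
  refine gramCone_mono (bicommutant_mono ?_) ((hS i).regularKernel_mem_gramCone ?_ ?_ ?_
    fun x => apply_mem_closure_of_mem_closure_sumSubmonoid hS (hf x) i)
  · rintro _ ⟨r, hr, rfl⟩
    exact ⟨i, rfl, r, hr, rfl⟩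
  · rw [eFun_eq_single, Pi.single_zero, hT.map_zero]
  · intro a ha b hb
    rw [← hT.map_add _ (eFun_mem_sumSubmonoid hS ha) _ (eFun_mem_sumSubmonoid hS hb)]
    simp only [eFun_eq_single, Pi.single_add]
  · exact fun a ha => hT.norm_le_one _ (eFun_mem_sumSubmonoid hS ha)

theorem regularKernel_indicator_mem_gramCone [Finite X] (F : Finset Ω) :
    regularKernel (fun s => T ((F : Set Ω).indicator s)) f ∈
      gramCone (coordinateAlgebra S T F : Set A) := by
  induction F using Finset.induction_on with
  | empty =>
    have hone : regularKernel (fun s => T ((∅ : Set Ω).indicator s)) f =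
        Matrix.vecMulVec (star fun _ => 1) fun _ => 1 := by
      ext x y
      simp [regularKernel, -Set.indicator_empty, Set.indicator_empty', hT.map_zero,
        Matrix.vecMulVec_apply]
    rw [Finset.coe_empty, hone]
    exact vecMulVec_star_self_mem_gramCone fun _ => one_mem (coordinateAlgebra S T ∅)
  | insert i F hi ih =>
    rw [Finset.coe_insert, hT.regularKernel_insert hS hf hi]
    have hdisj : Disjoint {i} (F : Set Ω) := Set.disjoint_singleton_left.2 (by simpa)
    refine gramCone_mono ?_ (hadamard_mem_gramCone (fun u hu v hv => ?_)
      (hT.regularKernel_coordinate_mem_gramCone hS hf i) ih)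
    · rintro _ ⟨u, hu, v, hv, rfl⟩
      exact mul_mem (coordinateAlgebra_mono (by simp) hu) (coordinateAlgebra_mono (by simp) hv)
    · exact ⟨hT.commute_of_disjoint hS hdisj hu hv,
        hT.commute_of_disjoint hS hdisj hu (star_mem hv)⟩

theorem regularKernel_posSemidef : (regularKernel T f).PosSemidef := by
  refine posSemidef_of_forall_finset_submatrix fun s => ?_
  have hfin : (⋃ x : s, (f x).support).Finite :=
    Set.finite_iUnion fun x => finite_support_of_mem_closure_sumSubmonoid hS (hf x)
  obtain ⟨F, hF⟩ : ∃ F : Finset Ω, ∀ x : s, (f x).support ⊆ F :=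
    ⟨hfin.toFinset, fun x => by simpa using Set.subset_iUnion (fun x : s => (f x).support) x⟩
  have hK : (regularKernel T f).submatrix ((↑) : s → X) (↑) =
      regularKernel (fun s => T ((F : Set Ω).indicator s)) fun x : s => f x := by
    ext x y
    have hg : (f y - f x).support ⊆ F :=
      (Function.support_sub _ _).trans (Set.union_subset (hF y) (hF x))
    simp only [regularKernel, Matrix.submatrix_apply, Matrix.of_apply,
      Set.indicator_eq_self.2 ((support_posPart_subset _).trans hg),
      Set.indicator_eq_self.2 ((support_negPart_subset _).trans hg)]
  rw [hK]
  exact posSemidef_of_mem_gramCone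
    (hT.regularKernel_indicator_mem_gramCone hS (X := s) (fun x => hf x) F)

end IsDoublyCommutingContractionSemigroup

end PositiveDefinite

section Naimark

universe u v w

variable {𝕜 : Type w} [RCLike 𝕜]

theorem denseRange_linearCombination {I R M : Type*} [Semiring R] [AddCommMonoid M]
    [Module R M] [TopologicalSpace M] [ContinuousAdd M] [ContinuousConstSMul R M] {e : I → M}
    (he : (Submodule.span R (Set.range e)).topologicalClosure = ⊤) :
    DenseRange (Finsupp.linearCombination R e) := by
  rwa [DenseRange, ← LinearMap.coe_range, Finsupp.range_linearCombination,
    Submodule.dense_iff_topologicalClosure_eq_top]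

theorem exists_linearIsometryEquiv_of_inner_eq {E F I : Type*} [NormedAddCommGroup E]
    [InnerProductSpace 𝕜 E] [CompleteSpace E] [NormedAddCommGroup F] [InnerProductSpace 𝕜 F]
    [CompleteSpace F] {e : I → E} {f : I → F}
    (he : (Submodule.span 𝕜 (Set.range e)).topologicalClosure = ⊤)
    (hf : (Submodule.span 𝕜 (Set.range f)).topologicalClosure = ⊤)
    (hef : ∀ i j, ⟪e i, e j⟫_𝕜 = ⟪f i, f j⟫_𝕜) :
    ∃ W : E ≃ₗᵢ[𝕜] F, ∀ i, W (e i) = f i := by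
  have hnorm (a : I →₀ 𝕜) :
      ‖Finsupp.linearCombination 𝕜 f a‖ = ‖Finsupp.linearCombination 𝕜 e a‖ := by
    rw [← sq_eq_sq₀ (norm_nonneg _) (norm_nonneg _), ← inner_self_eq_norm_sq (𝕜 := 𝕜),
      ← inner_self_eq_norm_sq (𝕜 := 𝕜)]
    simp only [Finsupp.linearCombination_apply, Finsupp.sum_inner, Finsupp.inner_sum,
      inner_smul_left, inner_smul_right, hef]
  refine ⟨(LinearEquiv.refl 𝕜 (I →₀ 𝕜)).extendOfIsometry _ _
    (denseRange_linearCombination he) (denseRange_linearCombination hf) hnorm, fun i => ?_⟩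
  simpa using LinearEquiv.extendOfIsometry_eq (.refl 𝕜 (I →₀ 𝕜)) _ _
    (denseRange_linearCombination he) (denseRange_linearCombination hf) hnorm (Finsupp.single i 1)

theorem exists_unitary_rep_of_inner_smul_eq {Γ X V E : Type*} [Group Γ] [MulAction Γ X]
    [NormedAddCommGroup E] [InnerProductSpace 𝕜 E] [CompleteSpace E] {e : X → V → E}
    (he : (Submodule.span 𝕜 {e x v | (x) (v)}).topologicalClosure = ⊤)
    (hinv : ∀ (g : Γ) x y v w, ⟪e (g • x) v, e (g • y) w⟫_𝕜 = ⟪e x v, e y w⟫_𝕜) :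
    ∃ U : Γ →* unitary (E →L[𝕜] E), ∀ g x v, (U g : E →L[𝕜] E) (e x v) = e (g • x) v := by
  have hrange (g : Γ) : Set.range (fun i : X × V => e (g • i.1) i.2) = {e x v | (x) (v)} := by
    ext z
    simp only [Set.mem_range, Prod.exists]
    exact ((MulAction.surjective g).exists (p := fun x => ∃ v, e x v = z)).symm
  have htotal (g : Γ) : (Submodule.span 𝕜 (Set.range fun i : X × V =>
      e (g • i.1) i.2)).topologicalClosure = ⊤ := by rw [hrange, he]
  choose W hW using fun g : Γ => exists_linearIsometryEquiv_of_inner_eq (htotal 1) (htotal g)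
    fun i j => by rw [hinv, hinv]
  replace hW (g : Γ) (x : X) (v : V) : W g (e x v) = e (g • x) v := by
    simpa using hW g (x, v)
  have hmul (g h : Γ) : W (g * h) = W g * W h := by
    have hWgh : (W (g * h) : E →L[𝕜] E) = (W g * W h : E ≃ₗᵢ[𝕜] E) := by
      refine ContinuousLinearMap.ext_on (Submodule.dense_iff_topologicalClosure_eq_top.2 he) ?_
      rintro _ ⟨x, v, rfl⟩
      simp [hW, mul_smul]
    ext z
    exact DFunLike.congr_fun hWgh z
  exact ⟨Unitary.linearIsometryEquiv.symm.toMonoidHom.comp (MonoidHom.mk' W hmul), hW⟩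

theorem exists_unitary_rep_dilation {G : Type u} [Group G] {H : Type v} [NormedAddCommGroup H]
    [InnerProductSpace 𝕜 H] [CompleteSpace H] {φ : G → H →L[𝕜] H} (hφ1 : φ 1 = 1)
    (hφ : (Matrix.of fun x y => φ (x⁻¹ * y)).PosSemidef) :
    ∃ (K : Type (max u v w)) (_ : NormedAddCommGroup K) (_ : InnerProductSpace 𝕜 K)
      (_ : CompleteSpace K) (ι : H →ₗᵢ[𝕜] K) (V : G →* unitary (K →L[𝕜] K)),
      (∀ g, adjoint ι.toContinuousLinearMap ∘L V g ∘L ι.toContinuousLinearMap = φ g) ∧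
      (Submodule.span 𝕜 {(V g : K →L[𝕜] K) (ι h) | (g) (h)}).topologicalClosure = ⊤ := by
  have : Fact (Matrix.of fun x y => φ (x⁻¹ * y)).PosSemidef := ⟨hφ⟩
  let K := RKHS.OfKernel (Matrix.of fun x y => φ (x⁻¹ * y))
  have hker (x y : G) : adjoint (RKHS.kerFun K x) ∘L RKHS.kerFun K y = φ (x⁻¹ * y) := by
    rw [← RKHS.kernel_apply, RKHS.OfKernel.kernel_ofKernel, Matrix.of_apply]
  have hinner (x y : G) (v w : H) :
      ⟪RKHS.kerFun K x v, RKHS.kerFun K y w⟫_𝕜 = ⟪φ (y⁻¹ * x) v, w⟫_𝕜 := by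
    rw [← hker, comp_apply, adjoint_inner_left]
  obtain ⟨V, hV⟩ := exists_unitary_rep_of_inner_smul_eq (Γ := G) (RKHS.kerFun_dense K)
    fun g x y v w => by rw [hinner, hinner, smul_eq_mul, smul_eq_mul, mul_inv_rev, mul_assoc,
      inv_mul_cancel_left]
  let ι : H →ₗᵢ[𝕜] K := (RKHS.kerFun K 1).toLinearMap.isometryOfInner fun v w => by
    simp [hinner, hφ1]
  have hι : ι.toContinuousLinearMap = RKHS.kerFun K 1 := rfl
  have hVι (g : G) (h : H) : (V g : K →L[𝕜] K) (ι h) = RKHS.kerFun K g h :=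
    (hV g 1 h).trans (by rw [smul_eq_mul, mul_one])
  refine ⟨K, inferInstance, inferInstance, inferInstance, ι, V, fun g => ?_, ?_⟩
  · rw [show (V g : K →L[𝕜] K) ∘L ι.toContinuousLinearMap = RKHS.kerFun K g from ext (hVι g), hι,
      hker, inv_one, one_mul]
  · simp only [hVι]
    exact RKHS.kerFun_dense K

end Naimark

section RegularDilation

universe u v

/-- `U` is a minimal regular unitary dilation of `T`, both families being indexed by the submonoid
`M` of `G`, in the larger Hilbert space `K` into which `ι` embeds `H`. The adjoint of `ι` plays the
role of the projection onto `H`, and `a - b` with `a, b ∈ M` runs through the group generated by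
`M`; the values of `U` off `M` are irrelevant. -/
structure IsMinimalRegularUnitaryDilation {G H K : Type*} [AddGroup G] [Lattice G]
    [NormedAddCommGroup H] [InnerProductSpace ℂ H] [CompleteSpace H]
    [NormedAddCommGroup K] [InnerProductSpace ℂ K] [CompleteSpace K]
    (M : AddSubmonoid G) (T : G → H →L[ℂ] H) (ι : H →ₗᵢ[ℂ] K) (U : G → K →L[ℂ] K) : Prop where
  map_zero : U 0 = 1
  map_add : ∀ a ∈ M, ∀ b ∈ M, U (a + b) = U a * U b
  mem_unitary : ∀ s ∈ M, U s ∈ unitary (K →L[ℂ] K)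
  regular : ∀ a ∈ M, ∀ b ∈ M, adjoint ι.toContinuousLinearMap ∘L
    (star (U (a - b)⁻) * U (a - b)⁺) ∘L ι.toContinuousLinearMap = star (T (a - b)⁻) * T (a - b)⁺
  minimal : (Submodule.span ℂ {x | ∃ a ∈ M, ∃ b ∈ M, ∃ h,
    x = (star (U (a - b)⁻) * U (a - b)⁺) (ι h)}).topologicalClosure = ⊤

theorem IsMinimalRegularUnitaryDilation.commute_star {G H K : Type*} [AddCommGroup G] [Lattice G]
    [NormedAddCommGroup H] [InnerProductSpace ℂ H] [CompleteSpace H]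
    [NormedAddCommGroup K] [InnerProductSpace ℂ K] [CompleteSpace K]
    {M : AddSubmonoid G} {T : G → H →L[ℂ] H} {ι : H →ₗᵢ[ℂ] K} {U : G → K →L[ℂ] K}
    (hU : IsMinimalRegularUnitaryDilation M T ι U) {a b : G} (ha : a ∈ M) (hb : b ∈ M) :
    Commute (U a) (star (U b)) := by
  have hab : Commute (U a) (U b) := by
    rw [Commute, SemiconjBy, ← hU.map_add a ha b hb, add_comm, hU.map_add b hb a ha]
  exact Commute.units_inv_right (u := Unitary.toUnits ⟨U b, hU.mem_unitary b hb⟩) hab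

theorem exists_extension_unitary_rep_subgroup {G A : Type*} [AddCommGroup G] [Lattice G]
    [IsOrderedAddMonoid G] [Monoid A] [StarMul A] {M : AddSubmonoid G}
    (hM : ∀ g ∈ AddSubgroup.closure (M : Set G), g⁺ ∈ M)
    (V : Multiplicative (AddSubgroup.closure (M : Set G)) →* unitary A) :
    ∃ U : G → A, U 0 = 1 ∧ (∀ a ∈ M, ∀ b ∈ M, U (a + b) = U a * U b) ∧
      (∀ s ∈ M, U s ∈ unitary A) ∧
      ∀ g : AddSubgroup.closure (M : Set G),
        star (U (g : G)⁻) * U (g : G)⁺ = V (.ofAdd g) := by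
  classical
  let Γ := AddSubgroup.closure (M : Set G)
  let U (g : G) : A := if hg : g ∈ Γ then V (.ofAdd ⟨g, hg⟩) else 1
  have hU (g : Γ) : U g = V (.ofAdd g) := dif_pos g.2
  have hMΓ {g : G} (hg : g ∈ M) : g ∈ Γ := AddSubgroup.subset_closure hg
  have hadd (g h : Γ) : U (g + h) = U g * U h := by
    rw [hU, hU, ← Submonoid.coe_mul, ← map_mul, ← ofAdd_add, ← hU, AddSubgroup.coe_add]
  have hunitary (g : Γ) : U g ∈ unitary A := by
    rw [hU]
    exact SetLike.coe_mem _
  refine ⟨U, ?_, fun a ha b hb => hadd ⟨a, hMΓ ha⟩ ⟨b, hMΓ hb⟩,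
    fun s hs => hunitary ⟨s, hMΓ hs⟩, fun g => ?_⟩
  · simpa using hU 0
  · have hneg : (g : G)⁻ ∈ Γ := by simpa using hMΓ (hM _ (neg_mem g.2))
    have hpos : U (g : G)⁺ = U (g : G)⁻ * U g := by
      rw [← hadd ⟨_, hneg⟩ g, ← sub_eq_iff_eq_add'.1 (posPart_sub_negPart (g : G))]
    rw [hpos, ← mul_assoc, Unitary.star_mul_self_of_mem (hunitary ⟨_, hneg⟩), one_mul, hU]

theorem exists_isMinimalRegularUnitaryDilation {G : Type u} [AddCommGroup G] [Lattice G]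
    [IsOrderedAddMonoid G] {H : Type v} [NormedAddCommGroup H] [InnerProductSpace ℂ H]
    [CompleteSpace H] {M : AddSubmonoid G} {T : G → H →L[ℂ] H}
    (hM : ∀ g ∈ AddSubgroup.closure (M : Set G), g⁺ ∈ M) (hT0 : T 0 = 1)
    (hT : (regularKernel T ((↑) : AddSubgroup.closure (M : Set G) → G)).PosSemidef) :
    ∃ (K : Type (max u v)) (_ : NormedAddCommGroup K) (_ : InnerProductSpace ℂ K)
      (_ : CompleteSpace K) (ι : H →ₗᵢ[ℂ] K) (U : G → K →L[ℂ] K),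
      IsMinimalRegularUnitaryDilation M T ι U := by
  let Γ := AddSubgroup.closure (M : Set G)
  let φ (g : Multiplicative Γ) : H →L[ℂ] H := star (T (g.toAdd : G)⁻) * T (g.toAdd : G)⁺
  have hφ : Matrix.of (fun x y => φ (x⁻¹ * y)) =
      regularKernel T fun x : Multiplicative Γ => (x.toAdd : G) := by
    ext1 x y
    simp only [φ, regularKernel, Matrix.of_apply, toAdd_mul, toAdd_inv, neg_add_eq_sub,
      AddSubgroup.coe_sub]
  obtain ⟨K, _, _, _, ι, V, hVφ, hV⟩ := exists_unitary_rep_dilation (φ := φ)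
    (by simp [φ, hT0]) (by rw [hφ]; exact hT)
  obtain ⟨U, hU0, hUadd, hU, hUV⟩ := exists_extension_unitary_rep_subgroup hM V
  refine ⟨K, inferInstance, inferInstance, inferInstance, ι, U, hU0, hUadd, hU, ?_, ?_⟩
  · intro a ha b hb
    have hab : a - b ∈ Γ := mem_addSubgroupClosure_iff_exists_sub.2 ⟨a, ha, b, hb, rfl⟩
    rw [hUV ⟨a - b, hab⟩]
    exact hVφ _
  · refine top_le_iff.1 (hV.ge.trans (Submodule.topologicalClosure_mono (Submodule.span_mono ?_)))
    rintro _ ⟨g, h, rfl⟩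
    obtain ⟨a, ha, b, hb, hab⟩ := mem_addSubgroupClosure_iff_exists_sub.1 g.toAdd.2
    exact ⟨a, ha, b, hb, h, by rw [← hab, hUV, ofAdd_toAdd]⟩

theorem doubly_commuting_semigroup_has_doubly_commuting_minimal_regular_unitary_dilation_general
    {Ω : Type u} [DecidableEq Ω] {H : Type v} [NormedAddCommGroup H] [InnerProductSpace ℂ H]
    [CompleteSpace H] {S : Ω → Set ℝ} (hS : ∀ i, IsCommensurableSubsemigroup (S i))
    {T : (Ω → ℝ) → H →L[ℂ] H} (hT : IsDoublyCommutingContractionSemigroup S T) :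
    ∃ (K : Type (max u v)) (_ : NormedAddCommGroup K) (_ : InnerProductSpace ℂ K)
      (_ : CompleteSpace K) (ι : H →ₗᵢ[ℂ] K) (U : (Ω → ℝ) → K →L[ℂ] K),
      IsMinimalRegularUnitaryDilation (sumSubmonoid hS) T ι U ∧
      ∀ a ∈ sumSubmonoid hS, ∀ b ∈ sumSubmonoid hS, Commute (U a) (star (U b)) := by
  obtain ⟨K, _, _, _, ι, U, hU⟩ := exists_isMinimalRegularUnitaryDilation
    (fun _ => posPart_mem_sumSubmonoid hS) hT.map_zero
    (hT.regularKernel_posSemidef hS Subtype.property)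
  exact ⟨K, _, _, _, ι, U, hU, fun a ha b hb => hU.commute_star ha hb⟩

end RegularDilation
/-- **Regular unitary dilation of a doubly commuting semigroup.**  A doubly commuting
semigroup of contractions over `S = Σᵢ Sᵢ` (`Sᵢ` commensurable unital subsemigroups
of `ℝ₊`) has a regular unitary dilation, and its minimal regular unitary dilation is
a doubly commuting family. -/
theorem doubly_commuting_semigroup_has_doubly_commuting_minimal_regular_unitary_dilation
    {Ω : Type} [DecidableEq Ω] {H : Type} [NormedAddCommGroup H]
    [InnerProductSpace ℂ H] [CompleteSpace H]
    (S : Ω → Set ℝ) (hS : ∀ i, IsCommensurableSubsemigroup (S i))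
    -- `T` is a semigroup of contractions on `H` over `SumSemigroup S`
    (T : (Ω → ℝ) → H →L[ℂ] H)
    (hT0 : T 0 = 1)
    (hTsg : ∀ a ∈ SumSemigroup S, ∀ b ∈ SumSemigroup S, T (a + b) = T a ∘L T b)
    (hTcontr : ∀ s ∈ SumSemigroup S, ‖T s‖ ≤ 1)
    -- `T` doubly commutes
    (hTdc : ∀ i j : Ω, i ≠ j → ∀ si ∈ S i, ∀ sj ∈ S j,
      T (eFun j sj) ∘L adjoint (T (eFun i si))
        = adjoint (T (eFun i si)) ∘L T (eFun j sj)) :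
    -- then `T` has a minimal regular unitary dilation which doubly commutes
    ∃ (K : Type) (_ : NormedAddCommGroup K) (_ : InnerProductSpace ℂ K)
      (_ : CompleteSpace K) (ι : H →L[ℂ] K) (U : (Ω → ℝ) → K →L[ℂ] K),
      (∀ h : H, ‖ι h‖ = ‖h‖) ∧
      U 0 = 1 ∧
      (∀ a ∈ SumSemigroup S, ∀ b ∈ SumSemigroup S, U (a + b) = U a ∘L U b) ∧
      (∀ s ∈ SumSemigroup S, U s ∘L adjoint (U s) = 1 ∧ adjoint (U s) ∘L U s = 1) ∧
      -- regular dilation of `T`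
      (∀ a ∈ SumSemigroup S, ∀ b ∈ SumSemigroup S,
        adjoint ι ∘L (adjoint (U (negPart' (a - b))) ∘L U (posPart' (a - b))) ∘L ι
          = adjoint (T (negPart' (a - b))) ∘L T (posPart' (a - b))) ∧
      -- minimality
      (Submodule.span ℂ {x : K | ∃ a ∈ SumSemigroup S, ∃ b ∈ SumSemigroup S,
          ∃ h : H, x = adjoint (U (negPart' (a - b)))
            (U (posPart' (a - b)) (ι h))}).topologicalClosure = ⊤ ∧
      -- the dilation is a doubly commuting family
      (∀ i j : Ω, i ≠ j → ∀ si ∈ S i, ∀ sj ∈ S j,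
        U (eFun j sj) ∘L adjoint (U (eFun i si))
          = adjoint (U (eFun i si)) ∘L U (eFun j sj)) := by
  obtain ⟨K, _, _, _, ι, U, hU, hUdc⟩ :=
    doubly_commuting_semigroup_has_doubly_commuting_minimal_regular_unitary_dilation_general hS
      ⟨hT0, hTsg, hTcontr, hTdc⟩
  simp only [posPart'_eq, negPart'_eq]
  exact ⟨K, inferInstance, inferInstance, inferInstance, ι.toContinuousLinearMap, U, ι.norm_map,
    hU.map_zero, hU.map_add, fun s hs => (Unitary.mem_iff.1 (hU.mem_unitary s hs)).symm, hU.regular,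
    hU.minimal, fun i j _ r hr q hq =>
      hUdc _ (eFun_mem_sumSubmonoid hS hq) _ (eFun_mem_sumSubmonoid hS hr)⟩
end
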